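/- Let p ≥ 7 be a prime. In the direct product group D_p × C₃, where D_p is the dihedral group of order 2p and C₃ = ⟨t⟩ is cyclic of order 3, there exist elements x and y such that x has order 6, y has order 6, the product x·y has order 3p, and x and y generate the whole group. (Explicitly, with r a rotation of order p and s a reflection, one may take x = (s, t) and y = (s·r, t).) -/

import Mathlib

/-! Take `x = (s, t)` and `y = (s r, t)`, where `t` generates the cyclic factor. Since `t` has odd
order, the components of `x` have coprime orders, so each of them is a power of `x`, and likewise
for `y`. Hence `x` and `y` generate the product of the subgroups `⟨s, s r⟩` and `⟨t⟩`, which is the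
whole group because `s * s r = r`. -/

section Prod

variable {G H : Type*} [Group G] [Group H]

theorem mk_one_mem_zpowers_of_coprime {x : G × H} (hx : (orderOf x.1).Coprime (orderOf x.2)) :
    (x.1, 1) ∈ Subgroup.zpowers x := by
  obtain ⟨k, hk⟩ := exists_pow_eq_self_of_coprime hx.symm
  have hpow : (x ^ orderOf x.2) ^ k = (x.1, 1) := by
    ext
    · exact hk
    · simp only [Prod.pow_snd, pow_orderOf_eq_one, one_pow]
  exact hpow ▸ pow_mem (pow_mem (Subgroup.mem_zpowers x) _) k

theorem one_mk_mem_zpowers_of_coprime {x : G × H} (hx : (orderOf x.1).Coprime (orderOf x.2)) :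
    (1, x.2) ∈ Subgroup.zpowers x := by
  have hmul : (x.1, 1)⁻¹ * x = (1, x.2) := by
    ext <;> simp
  exact hmul ▸ mul_mem (inv_mem (mk_one_mem_zpowers_of_coprime hx)) (Subgroup.mem_zpowers x)

theorem closure_eq_prod_closure_of_coprime {S : Set (G × H)}
    (hS : ∀ x ∈ S, (orderOf x.1).Coprime (orderOf x.2)) :
    Subgroup.closure S =
      (Subgroup.closure (Prod.fst '' S)).prod (Subgroup.closure (Prod.snd '' S)) := by
  apply le_antisymm
  · rw [Subgroup.closure_le]
    exact fun x hx ↦ ⟨Subgroup.subset_closure (Set.mem_image_of_mem _ hx),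
      Subgroup.subset_closure (Set.mem_image_of_mem _ hx)⟩
  · have zpowers_le {x : G × H} (hx : x ∈ S) : Subgroup.zpowers x ≤ Subgroup.closure S :=
      Subgroup.zpowers_le.2 (Subgroup.subset_closure hx)
    rw [Subgroup.prod_le_iff, MonoidHom.map_closure, MonoidHom.map_closure, Subgroup.closure_le,
      Subgroup.closure_le, Set.image_image, Set.image_image, Set.image_subset_iff,
      Set.image_subset_iff]
    exact ⟨fun x hx ↦ zpowers_le hx (mk_one_mem_zpowers_of_coprime (hS x hx)),
      fun x hx ↦ zpowers_le hx (one_mk_mem_zpowers_of_coprime (hS x hx))⟩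

end Prod

section Dihedral

open DihedralGroup

variable {n : ℕ}

theorem closure_sr_sr_add_one_eq_top (i : ZMod n) : Subgroup.closure {sr i, sr (i + 1)} = ⊤ := by
  set K := Subgroup.closure {sr i, sr (i + 1)}
  have sr_mem : sr i ∈ K := Subgroup.subset_closure (Set.mem_insert _ _)
  have sr_add_one_mem : sr (i + 1) ∈ K := Subgroup.subset_closure (Set.mem_insert_of_mem _ rfl)
  have r_one_mem : r 1 ∈ K := by
    simpa only [sr_mul_sr, add_sub_cancel_left] using mul_mem sr_mem sr_add_one_mem
  have r_mem (j : ZMod n) : r j ∈ K := by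
    obtain ⟨k, rfl⟩ := ZMod.intCast_surjective j
    exact r_one_zpow (n := n) k ▸ zpow_mem r_one_mem k
  refine (Subgroup.eq_top_iff' K).2 ?_
  rintro (j | j)
  · exact r_mem j
  · simpa only [sr_mul_r, add_sub_cancel] using mul_mem sr_mem (r_mem (j - i))

variable {C : Type*} [Group C] {t : C}

theorem coprime_orderOf_sr_of_odd (ht : Odd (orderOf t)) (i : ZMod n) :
    (orderOf (sr i)).Coprime (orderOf t) := by
  rwa [orderOf_sr, Nat.coprime_two_left]

theorem orderOf_sr_mk_of_odd (ht : Odd (orderOf t)) (i : ZMod n) :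
    orderOf (sr i, t) = 2 * orderOf t := by
  rw [Prod.orderOf_mk, (coprime_orderOf_sr_of_odd ht i).lcm_eq_mul, orderOf_sr]

theorem orderOf_sr_mk_mul_sr_add_one_mk (ht : Odd (orderOf t)) (hn : n.Coprime (orderOf t))
    (i : ZMod n) : orderOf ((sr i, t) * (sr (i + 1), t)) = orderOf t * n := by
  have orderOf_mul_self : orderOf (t * t) = orderOf t := by
    rw [← sq, Nat.Coprime.orderOf_pow (Nat.coprime_two_right.2 ht)]
  rw [Prod.mk_mul_mk, sr_mul_sr, add_sub_cancel_left, Prod.orderOf_mk, orderOf_r_one,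
    orderOf_mul_self, hn.lcm_eq_mul, mul_comm]

theorem closure_sr_mk_sr_add_one_mk (ht : Odd (orderOf t)) (i : ZMod n) :
    Subgroup.closure {(sr i, t), (sr (i + 1), t)} =
      (⊤ : Subgroup (DihedralGroup n)).prod (Subgroup.zpowers t) := by
  have components_coprime : ∀ x ∈ ({(sr i, t), (sr (i + 1), t)} : Set (DihedralGroup n × C)),
      (orderOf x.1).Coprime (orderOf x.2) := by
    rintro _ (rfl | rfl) <;> exact coprime_orderOf_sr_of_odd ht _
  rw [closure_eq_prod_closure_of_coprime components_coprime, Set.image_pair, Set.image_pair,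
    closure_sr_sr_add_one_eq_top, Set.pair_eq_singleton, ← Subgroup.zpowers_eq_closure]

end Dihedral

theorem generating_pair_Dp_Z3_66_general {C : Type*} [Group C] [IsCyclic C]
    (hC : Odd (Nat.card C)) {n : ℕ} (hn : n.Coprime (Nat.card C)) :
    ∃ x y : DihedralGroup n × C,
      orderOf x = 2 * Nat.card C ∧ orderOf y = 2 * Nat.card C ∧
      orderOf (x * y) = Nat.card C * n ∧ Subgroup.closure {x, y} = ⊤ := by
  obtain ⟨t, ht⟩ := isCyclic_iff_exists_zpowers_eq_top.1 ‹IsCyclic C›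
  rw [← orderOf_eq_card_of_zpowers_eq_top ht] at hC hn ⊢
  refine ⟨(.sr 0, t), (.sr (0 + 1), t), orderOf_sr_mk_of_odd hC _, orderOf_sr_mk_of_odd hC _,
    orderOf_sr_mk_mul_sr_add_one_mk hC hn 0, ?_⟩
  rw [closure_sr_mk_sr_add_one_mk hC, ht, Subgroup.top_prod_top]

/-- For `p ≥ 7` prime, the group `D_p × C₃` has a generating pair `x, y` with `x`
of order 6, `y` of order 6 and `x * y` of order `3p`. -/
theorem generating_pair_Dp_Z3_66 (p : ℕ) (hp : p.Prime) (hp7 : 7 ≤ p) :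
    ∃ x y : DihedralGroup p × Multiplicative (ZMod 3),
      orderOf x = 6 ∧ orderOf y = 6 ∧ orderOf (x * y) = 3 * p ∧
      Subgroup.closure {x, y} = ⊤ := by
  have odd_three : Odd 3 := by decide
  have coprime_three : p.Coprime 3 := (Nat.coprime_primes hp Nat.prime_three).2 (by lia)
  simpa using generating_pair_Dp_Z3_66_general (C := Multiplicative (ZMod 3)) (n := p)
    (by simpa using odd_three) (by simpa using coprime_three)
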